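/- arXiv:2201.12699 — 6 statements merged into one kernel-verified Lean document; each statement's English description precedes it below -/
import Mathlib

section
/- Let κ ∈ (0,1), let f : ℝ → ℝ be defined by f(T) = ∫₀^T F(1/4, 3/4; 1/2; κ² sin² t) dt, let φ : ℝ → ℝ be the inverse function of f, and let ψ = arcsin(κ sin φ). Then for every u ∈ ℝ, the derivative of φ at u equals cos ψ(u) / cos(ψ(u)/2). -/
open Real

/-- The Gauss hypergeometric series `F(a, b; c; x)`. -/
noncomputable def gaussHyp (a b c x : ℝ) : ℝ :=
  ∑' n : ℕ, ((ascPochhammer ℝ n).eval a * (ascPochhammer ℝ n).eval b /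
    ((ascPochhammer ℝ n).eval c * (n.factorial : ℝ))) * x ^ n

/-!
The hypergeometric function in the integrand is elementary: for `|s| < 1`,
`F(1/4, 3/4; 1/2; s²) = ((1 - s)^(-1/2) + (1 + s)^(-1/2)) / 2`, because the duplication identity
`(1/4)_n (3/4)_n / ((1/2)_n n!) = (1/2)_{2n} / (2n)!` exhibits the left side as the even part of the
binomial series of `(1 - s)^(-1/2)` (`gaussHyp_sq`). For `s = sin ψ` with `|ψ| < π/2` one has
`√(1 ± sin ψ) = cos (ψ/2) ± sin (ψ/2)`, so the value is `cos (ψ/2) / cos ψ` (`gaussHyp_sin_sq`).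
Hence the integrand is continuous and positive, `f' = cos (ψ/2) / cos ψ` by the fundamental theorem
of calculus, and the derivative of the inverse function `φ` is the reciprocal. The continuity of `φ`
needed for the inverse rule holds since `φ` is a monotone surjection.
-/

/-- Duplication formula: the coefficients of `F(1/4, 3/4; 1/2; ·)` are the even-indexed
coefficients of the binomial series of `(1 - x)^(-1/2)`. -/
lemma coeff_duplication (n : ℕ) :
    (ascPochhammer ℝ n).eval (1/4) * (ascPochhammer ℝ n).eval (3/4) /
      ((ascPochhammer ℝ n).eval (1/2) * (n.factorial : ℝ)) =
    (ascPochhammer ℝ (2 * n)).eval (1/2) / ((2 * n).factorial : ℝ) := by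
  induction n with
  | zero => simp
  | succ n ih =>
    have h1 : (ascPochhammer ℝ n).eval (1/2) ≠ 0 := (ascPochhammer_pos n _ (by norm_num)).ne'
    have h2 : (n.factorial : ℝ) ≠ 0 := by positivity
    have h3 : ((2 * n).factorial : ℝ) ≠ 0 := by positivity
    have h4 : (1 / 2 + n : ℝ) ≠ 0 := by positivity
    have h5 : (2 * n + 1 : ℝ) ≠ 0 := by positivity
    have h6 : (n + 1 : ℝ) ≠ 0 := by positivity
    rw [show 2 * (n + 1) = 2 * n + 1 + 1 by ring]
    simp only [ascPochhammer_succ_eval, Nat.factorial_succ]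
    push_cast
    calc _ = ((ascPochhammer ℝ n).eval (1/4) * (ascPochhammer ℝ n).eval (3/4) /
      ((ascPochhammer ℝ n).eval (1/2) * (n.factorial : ℝ))) *
        ((1/4 + n) * (3/4 + n) / ((1/2 + n) * (n + 1))) := by field_simp
      _ = _ := by
        rw [ih]
        field_simp
        ring

lemma choose_eq_ascPochhammer (a : ℝ) (n : ℕ) :
    Ring.choose (a + n - 1) n = (ascPochhammer ℝ n).eval a / (n.factorial : ℝ) := by
  rw [← Ring.multichoose_eq]
  have h := Ring.factorial_nsmul_multichoose_eq_ascPochhammer a n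
  rw [Polynomial.ascPochhammer_smeval_eq_eval, nsmul_eq_mul] at h
  rw [← h]
  field_simp

lemma hasSum_binomial {s : ℝ} (hs : |s| < 1) :
    HasSum (fun n : ℕ => (ascPochhammer ℝ n).eval (1/2) / (n.factorial : ℝ) * s ^ n)
      (1 / √(1 - s)) := by
  have h := (Real.one_div_one_sub_rpow_hasFPowerSeriesOnBall_zero (1/2)).hasSum
    (y := s) (by simpa [enorm_eq_nnnorm, ← NNReal.coe_lt_one] using hs)
  simpa [FormalMultilinearSeries.ofScalars_apply_eq, choose_eq_ascPochhammer,
    Real.sqrt_eq_rpow, mul_comm] using h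

/-- `F(1/4, 3/4; 1/2; s²)` is the even part of `(1 - s)^(-1/2)`. -/
lemma gaussHyp_sq {s : ℝ} (hs : |s| < 1) :
    gaussHyp (1/4) (3/4) (1/2) (s ^ 2) = (1 / √(1 - s) + 1 / √(1 + s)) / 2 := by
  have h1 := hasSum_binomial hs
  have h2 := hasSum_binomial (s := -s) (by rwa [abs_neg])
  rw [sub_neg_eq_add] at h2
  have h3 := (h1.add h2).div_const 2
  have hinj : Function.Injective (fun n : ℕ => 2 * n) := fun a b h => by
    simpa using h
  rw [← hinj.hasSum_iff] at h3
  · rw [← h3.tsum_eq, gaussHyp]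
    refine tsum_congr fun n => ?_
    rw [coeff_duplication]
    simp only [Function.comp, pow_mul, neg_sq]
    ring
  · intro n hn
    have hodd : Odd n := by
      rw [← Nat.not_even_iff_odd]
      rintro ⟨m, rfl⟩
      exact hn ⟨m, by simp only; ring⟩
    simp [hodd.neg_pow]

lemma gaussHyp_sin_sq {ψ : ℝ} (h1 : -(π / 2) < ψ) (h2 : ψ < π / 2) :
    gaussHyp (1/4) (3/4) (1/2) (sin ψ ^ 2) = cos (ψ / 2) / cos ψ := by
  have hc : 0 < cos ψ := cos_pos_of_mem_Ioo ⟨h1, h2⟩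
  have hd : cos ψ = (cos (ψ / 2) - sin (ψ / 2)) * (cos (ψ / 2) + sin (ψ / 2)) := by
    have := cos_two_mul' (ψ / 2)
    rw [mul_div_cancel₀ _ two_ne_zero] at this
    rw [this]; ring
  have hsin : sin ψ = 2 * sin (ψ / 2) * cos (ψ / 2) := by
    rw [← sin_two_mul, mul_div_cancel₀ _ two_ne_zero]
  have hch : 0 < cos (ψ / 2) := cos_pos_of_mem_Ioo ⟨by linarith, by linarith⟩
  have hsc := sin_sq_add_cos_sq (ψ / 2)
  -- The two factors of `cos ψ > 0` have positive sum `2 cos (ψ / 2)`, so both are positive.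
  have hpos : 0 < cos (ψ / 2) - sin (ψ / 2) ∧ 0 < cos (ψ / 2) + sin (ψ / 2) := by
    rw [hd] at hc
    rcases mul_pos_iff.1 hc with h | h
    · exact h
    · linarith
  have e1 : √(1 - sin ψ) = cos (ψ / 2) - sin (ψ / 2) := by
    rw [Real.sqrt_eq_iff_mul_self_eq_of_pos hpos.1, hsin]; linarith
  have e2 : √(1 + sin ψ) = cos (ψ / 2) + sin (ψ / 2) := by
    rw [Real.sqrt_eq_iff_mul_self_eq_of_pos hpos.2, hsin]; linarith
  have habs : |sin ψ| < 1 := by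
    rw [← sq_lt_one_iff_abs_lt_one]
    nlinarith [sin_sq_add_cos_sq ψ, pow_pos hc 2]
  rw [gaussHyp_sq habs, e1, e2, hd]
  have := hpos.1.ne'
  have := hpos.2.ne'
  field_simp
  ring

theorem stmt_1 (κ : ℝ) (hκ : κ ∈ Set.Ioo (0 : ℝ) 1)
    (f : ℝ → ℝ)
    (hf : ∀ T : ℝ, f T = ∫ t in (0:ℝ)..T, gaussHyp (1/4) (3/4) (1/2) (κ^2 * Real.sin t ^ 2))
    (φ : ℝ → ℝ) (hφf : Function.LeftInverse φ f) (hfφ : Function.RightInverse φ f)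
    (ψ : ℝ → ℝ) (hψ : ∀ u : ℝ, ψ u = Real.arcsin (κ * Real.sin (φ u))) :
    ∀ u : ℝ, HasDerivAt φ (Real.cos (ψ u) / Real.cos (ψ u / 2)) u := by
  have habs : ∀ t : ℝ, |κ * sin t| < 1 := fun t => by
    rw [abs_mul, abs_of_pos hκ.1]
    nlinarith [abs_sin_le_one t, abs_nonneg (sin t), hκ.1, hκ.2]
  have hb : ∀ t : ℝ, 0 < 1 - κ * sin t ∧ 0 < 1 + κ * sin t := fun t => by
    have := abs_lt.1 (habs t)
    constructor <;> linarith
  have hval : ∀ t : ℝ, gaussHyp (1/4) (3/4) (1/2) (κ^2 * sin t ^ 2) =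
      (1 / √(1 - κ * sin t) + 1 / √(1 + κ * sin t)) / 2 := fun t => by
    rw [← mul_pow, gaussHyp_sq (habs t)]
  have hcont : Continuous fun t : ℝ => gaussHyp (1/4) (3/4) (1/2) (κ^2 * sin t ^ 2) := by
    simp only [hval]
    refine ((continuous_const.div (by fun_prop) fun t => ?_).add
      (continuous_const.div (by fun_prop) fun t => ?_)).div_const 2
    · exact (sqrt_pos.2 (hb t).1).ne'
    · exact (sqrt_pos.2 (hb t).2).ne'
  have hpos : ∀ t : ℝ, 0 < gaussHyp (1/4) (3/4) (1/2) (κ^2 * sin t ^ 2) := fun t => by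
    rw [hval]
    have := sqrt_pos.2 (hb t).1
    have := sqrt_pos.2 (hb t).2
    positivity
  have hderiv : ∀ T, HasDerivAt f (gaussHyp (1/4) (3/4) (1/2) (κ^2 * sin T ^ 2)) T := fun T => by
    rw [funext hf]
    exact (hcont.integral_hasStrictDerivAt 0 T).hasDerivAt
  have hmono : StrictMono f := strictMono_of_hasDerivAt_pos hderiv hpos
  have hφmono : Monotone φ := fun a b hab => by
    rw [← hmono.le_iff_le, hfφ a, hfφ b]
    exact hab
  have hφcont : Continuous φ := hφmono.continuous_of_surjective hφf.surjective
  intro u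
  have h := HasDerivAt.of_local_left_inverse hφcont.continuousAt (hderiv (φ u)) (hpos _).ne'
    (Filter.Eventually.of_forall hfφ)
  have hs := abs_lt.1 (habs (φ u))
  have hsin : sin (ψ u) = κ * sin (φ u) := by
    rw [hψ, sin_arcsin hs.1.le hs.2.le]
  rwa [← mul_pow, ← hsin, gaussHyp_sin_sq, inv_div] at h
  · rw [hψ]; exact neg_pi_div_two_lt_arcsin.2 hs.1
  · rw [hψ]; exact arcsin_lt_pi_div_two.2 hs.2
end

section
/- Let κ ∈ (0,1) and let I = ∫₀^{π/2} F(1/4, 3/4; 1/2; κ² sin² t) dt. Then I = (π/2) · F(1/4, 3/4; 1; κ²), where both hypergeometric functions are given by the Gauss hypergeometric series. -/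
open Real

/-!
Integrate the hypergeometric series term by term. Wallis' formula
`∫₀^{π/2} sin²ⁿ t dt = (π/2) (1/2)ₙ / n!` (`integral_sin_pow_two_mul`) cancels the factor `(1/2)ₙ`
in the denominator of the `n`-th coefficient and puts `n! = (1)ₙ` in its place.
The interchange of sum and integral is by dominated convergence: the coefficients of
`F(1/4, 3/4; 1/2; ·)` lie in `[0, 1]`, since `(1/4)ₙ ≤ (1/2)ₙ` and `(3/4)ₙ ≤ (1)ₙ = n!`, so the
`n`-th term is at most `κ²ⁿ`.
-/

lemma ascPochhammer_eval_mono (n : ℕ) {x y : ℝ} (hx : 0 < x) (hxy : x ≤ y) :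
    (ascPochhammer ℝ n).eval x ≤ (ascPochhammer ℝ n).eval y := by
  induction n with
  | zero => simp
  | succ n ih =>
    rw [ascPochhammer_succ_eval, ascPochhammer_succ_eval]
    have := ascPochhammer_pos n y (hx.trans_le hxy)
    gcongr

/-- Wallis' formula on the quarter period, in Pochhammer form. -/
lemma integral_sin_pow_two_mul (n : ℕ) :
    ∫ t in (0:ℝ)..(π/2), Real.sin t ^ (2 * n) =
      (π / 2) * ((ascPochhammer ℝ n).eval (1/2) / (n.factorial : ℝ)) := by
  induction n with
  | zero => simp
  | succ n ih =>
    have h := integral_sin_pow (a := 0) (b := π / 2) (2 * n)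
    rw [ih] at h
    rw [mul_add, mul_one, h, ascPochhammer_succ_eval, Nat.factorial_succ]
    have : (n.factorial : ℝ) ≠ 0 := by positivity
    simp
    field_simp
    ring

/-- The bound that makes a geometric series dominate `F(1/4, 3/4; 1/2; ·)`. -/
lemma coeff_mem_Icc (n : ℕ) :
    (ascPochhammer ℝ n).eval (1/4) * (ascPochhammer ℝ n).eval (3/4) /
      ((ascPochhammer ℝ n).eval (1/2) * (n.factorial : ℝ)) ∈ Set.Icc (0 : ℝ) 1 := by
  have h1 := ascPochhammer_pos n (1/4 : ℝ) (by norm_num)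
  have h2 := ascPochhammer_pos n (3/4 : ℝ) (by norm_num)
  have h3 := ascPochhammer_pos n (1/2 : ℝ) (by norm_num)
  have h4 := ascPochhammer_eval_mono n (x := 1/4) (y := 1/2) (by norm_num) (by norm_num)
  have h5 := ascPochhammer_eval_mono n (x := 3/4) (y := 1) (by norm_num) (by norm_num)
  rw [ascPochhammer_eval_one] at h5
  refine ⟨by positivity, (div_le_one (by positivity)).2 ?_⟩
  gcongr

theorem stmt_7 (κ : ℝ) (hκ : κ ∈ Set.Ioo (0 : ℝ) 1) :
    (∫ t in (0:ℝ)..(π/2), gaussHyp (1/4) (3/4) (1/2) (κ^2 * Real.sin t ^ 2)) =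
      (π / 2) * gaussHyp (1/4) (3/4) 1 (κ^2) := by
  obtain ⟨h0, h1⟩ := hκ
  have hgeo : Summable fun n : ℕ => (κ ^ 2) ^ n :=
    summable_geometric_of_lt_one (by positivity) (by nlinarith)
  have hbound (n : ℕ) (t : ℝ) :
      ‖(ascPochhammer ℝ n).eval (1/4) * (ascPochhammer ℝ n).eval (3/4) /
        ((ascPochhammer ℝ n).eval (1/2) * (n.factorial : ℝ)) *
          (κ ^ 2 * Real.sin t ^ 2) ^ n‖ ≤ (κ ^ 2) ^ n := by
    obtain ⟨hc0, hc1⟩ := coeff_mem_Icc n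
    rw [Real.norm_of_nonneg (by positivity)]
    have hs : κ ^ 2 * Real.sin t ^ 2 ≤ κ ^ 2 :=
      mul_le_of_le_one_right (by positivity) (Real.sin_sq_le_one t)
    calc _ ≤ 1 * (κ ^ 2) ^ n := by gcongr
      _ = _ := one_mul _
  have hsum := intervalIntegral.hasSum_integral_of_dominated_convergence
    (μ := MeasureTheory.volume) (a := 0) (b := π / 2)
    (F := fun (n : ℕ) (t : ℝ) => (ascPochhammer ℝ n).eval (1/4) * (ascPochhammer ℝ n).eval (3/4) /
        ((ascPochhammer ℝ n).eval (1/2) * (n.factorial : ℝ)) * (κ ^ 2 * Real.sin t ^ 2) ^ n)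
    (f := fun t => gaussHyp (1/4) (3/4) (1/2) (κ^2 * Real.sin t ^ 2))
    (fun n _ => (κ ^ 2) ^ n)
    (fun n => Continuous.aestronglyMeasurable (by fun_prop))
    (fun n => .of_forall fun t _ => hbound n t)
    (.of_forall fun t _ => hgeo)
    intervalIntegrable_const
    (.of_forall fun t _ => (Summable.of_norm_bounded hgeo fun n => hbound n t).hasSum)
  rw [← hsum.tsum_eq, gaussHyp, ← tsum_mul_left]
  refine tsum_congr fun n => ?_
  simp_rw [mul_pow, ← pow_mul]
  rw [intervalIntegral.integral_const_mul, intervalIntegral.integral_const_mul,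
    integral_sin_pow_two_mul, ascPochhammer_eval_one]
  have h3 := (ascPochhammer_pos n (1/2 : ℝ) (by norm_num)).ne'
  have : (n.factorial : ℝ) ≠ 0 := by positivity
  field_simp
end

section
/- Let κ ∈ (0,1), let f : ℝ → ℝ be defined by f(T) = ∫₀^T F(1/4, 3/4; 1/2; κ² sin² t) dt, let φ be the inverse of f, and let I = f(π/2). Then for every u ∈ ℝ, φ(u + 2I) = φ(u) + π. -/
/-!
The integrand `g t = F(1/4, 3/4; 1/2; κ² sin² t)` is even and `π`-periodic, since `sin²` is. Hence
its integral over any interval of length `π` equals its integral over `[-π/2, π/2]`, which is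
`2 I`, so that `f (T + π) = f T + 2 I`; applying `φ` with `T = φ u` gives the claim.

Splitting integrals requires `g` to be interval integrable. No analysis of the hypergeometric series
is needed for this: `f` is injective, and failure of integrability on `[0, T]` with `T ≠ 0` would
give `f T = 0 = f 0`.
-/

open Real

theorem stmt_8 (κ : ℝ) (hκ : κ ∈ Set.Ioo (0 : ℝ) 1)
    (f : ℝ → ℝ)
    (hf : ∀ T : ℝ, f T = ∫ t in (0:ℝ)..T, gaussHyp (1/4) (3/4) (1/2) (κ^2 * Real.sin t ^ 2))
    (φ : ℝ → ℝ) (hφf : Function.LeftInverse φ f) (hfφ : Function.RightInverse φ f)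
    (I : ℝ) (hI : I = f (π/2)) :
    ∀ u : ℝ, φ (u + 2 * I) = φ u + π := by
  have hf0 : f 0 = 0 := by rw [hf, intervalIntegral.integral_same]
  set g : ℝ → ℝ := fun t => gaussHyp (1/4) (3/4) (1/2) (κ^2 * Real.sin t ^ 2) with hg
  replace hf : ∀ T : ℝ, f T = ∫ t in (0:ℝ)..T, g t := hf
  have hper : Function.Periodic g π := fun t => by simp [hg, Real.sin_add_pi]
  have heven : ∀ t, g (-t) = g t := fun t => by simp [hg, Real.sin_neg]
  -- If `g` were not integrable on `[0, T]`, the junk value `f T = 0 = f 0` would force `T = 0`,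
  -- where integrability is trivial.
  have hint0 : ∀ T, IntervalIntegrable g MeasureTheory.volume 0 T := by
    intro T
    by_contra h
    have hT : T = 0 := hφf.injective (by
      rw [hf0, hf, intervalIntegral.integral_undef h])
    exact h (hT ▸ IntervalIntegrable.refl)
  have hint : ∀ a b, IntervalIntegrable g MeasureTheory.volume a b :=
    fun a b => (hint0 a).symm.trans (hint0 b)
  have hodd : ∫ t in (-(π/2))..0, g t = f (π/2) := by
    have h := intervalIntegral.integral_comp_neg (a := 0) (b := π/2) g
    simp only [heven, neg_zero] at h
    rw [hf, h]
  have hperiod : ∀ T, ∫ t in T..(T + π), g t = 2 * I := by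
    intro T
    rw [hper.intervalIntegral_add_eq T (-(π/2)), show -(π/2) + π = π/2 by ring,
      ← intervalIntegral.integral_add_adjacent_intervals (hint _ 0) (hint 0 _), hodd, ← hf, hI]
    ring
  have hquasi : ∀ T, f (T + π) = f T + 2 * I := by
    intro T
    rw [hf (T + π), ← intervalIntegral.integral_add_adjacent_intervals (hint 0 T) (hint T _),
      hperiod, ← hf]
  intro u
  calc φ (u + 2 * I) = φ (f (φ u + π)) := by rw [hquasi, hfφ]
    _ = φ u + π := hφf _
end

section
/- Let κ ∈ (0,1), let f : ℝ → ℝ be defined by f(T) = ∫₀^T F(1/4, 3/4; 1/2; κ² sin² t) dt, let φ be the inverse of f, let ψ = arcsin(κ sin φ), let d = cos ψ, and let I = f(π/2). Then d is periodic with period 2I, and 2I is the least positive period of d; moreover 2I = π · F(1/4, 3/4; 1; κ²). -/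
/-!
Write `G t = F(1/4, 3/4; 1/2; κ² sin² t)`, the integrand of `f`. Its coefficients lie in `(0, 1]`
(`coeff_pos`, `coeff_le_one`), so the series is dominated by a geometric one; hence `G` is
continuous and `G ≥ 1`. Since `G` is `π`-periodic and symmetric about `π/2`,
`f (T + π) = f T + f π` and `f π = 2 f (π/2) = 2I`. Applying `φ`, we get `φ (u + 2I) = φ u + π`,
and `d = √(1 - κ² sin² φ)` is `2I`-periodic.

If `T > 0` is a period, then `d T = d 0 = 1`, so `sin (φ T) = 0` and `φ T = kπ`; as `f` is
strictly increasing, `k ≥ 1` and `T = f (kπ) ≥ f π = 2I`.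

For the value of `2I = f π`, integrate the series termwise over `[0, π]`
(`integral_gaussHyp_sin`). Wallis' formula `∫₀^π sin²ⁿ = π (1/2)ₙ / n!` cancels the `(1/2)ₙ` in
the denominator and leaves `(1)ₙ = n!` in its place.
-/


open Real

/-- The coefficients of `F(1/4, 3/4; 1/2; x)`. -/
noncomputable def coeff (n : ℕ) : ℝ :=
  (ascPochhammer ℝ n).eval (1/4) * (ascPochhammer ℝ n).eval (3/4) /
    ((ascPochhammer ℝ n).eval (1/2) * (n.factorial : ℝ))

lemma gaussHyp_eq (x : ℝ) : gaussHyp (1/4) (3/4) (1/2) x = ∑' n : ℕ, coeff n * x ^ n := rfl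

lemma coeff_zero : coeff 0 = 1 := by simp [coeff]

lemma coeff_pos (n : ℕ) : 0 < coeff n := by
  have h1 := ascPochhammer_pos n (1/4 : ℝ) (by norm_num)
  have h2 := ascPochhammer_pos n (3/4 : ℝ) (by norm_num)
  have h3 := ascPochhammer_pos n (1/2 : ℝ) (by norm_num)
  unfold coeff
  positivity

/-- The ratio of consecutive coefficients, `(n + 1/4)(n + 3/4) / ((n + 1/2)(n + 1))`, is below `1`. -/
lemma coeff_le_one (n : ℕ) : coeff n ≤ 1 := by
  induction n with
  | zero => rw [coeff_zero]
  | succ n ih =>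
    have hs : coeff (n + 1) = coeff n * (((1/4 + n) * (3/4 + n)) / ((1/2 + n) * (n + 1))) := by
      have h3 := (ascPochhammer_pos n (1/2 : ℝ) (by norm_num)).ne'
      have h4 : (n.factorial : ℝ) ≠ 0 := by positivity
      have h5 : (1/2 + n : ℝ) ≠ 0 := by positivity
      have h6 : (n + 1 : ℝ) ≠ 0 := by positivity
      unfold coeff
      simp only [ascPochhammer_succ_eval, Nat.factorial_succ]
      push_cast
      rw [div_mul_div_comm]
      congr 1 <;> ring
    rw [hs]
    refine mul_le_one₀ ih (by positivity) ?_
    rw [div_le_one (by positivity)]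
    nlinarith [(Nat.cast_nonneg n : (0:ℝ) ≤ n)]

lemma sq_mem {κ : ℝ} (hκ : κ ∈ Set.Ioo (0 : ℝ) 1) : 0 ≤ κ ^ 2 ∧ κ ^ 2 < 1 :=
  ⟨by positivity, by have := hκ.1; have := hκ.2; nlinarith⟩

lemma term_nonneg (κ : ℝ) (n : ℕ) (t : ℝ) : 0 ≤ coeff n * (κ ^ 2 * sin t ^ 2) ^ n := by
  have := coeff_pos n
  positivity

lemma term_le (κ : ℝ) (n : ℕ) (t : ℝ) :
    coeff n * (κ ^ 2 * sin t ^ 2) ^ n ≤ (κ ^ 2) ^ n := by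
  have h : (κ ^ 2 * sin t ^ 2) ^ n ≤ (κ ^ 2) ^ n :=
    pow_le_pow_left₀ (by positivity)
      (mul_le_of_le_one_right (by positivity) (sin_sq_le_one t)) n
  calc _ ≤ 1 * (κ ^ 2) ^ n :=
        mul_le_mul (coeff_le_one n) h (by positivity) zero_le_one
    _ = _ := one_mul _

lemma norm_term_le (κ : ℝ) (n : ℕ) (t : ℝ) :
    ‖coeff n * (κ ^ 2 * sin t ^ 2) ^ n‖ ≤ (κ ^ 2) ^ n := by
  rw [Real.norm_of_nonneg (term_nonneg κ n t)]
  exact term_le κ n t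

lemma summable_geom {κ : ℝ} (hκ : κ ∈ Set.Ioo (0 : ℝ) 1) :
    Summable fun n : ℕ => (κ ^ 2) ^ n :=
  summable_geometric_of_lt_one (sq_mem hκ).1 (sq_mem hκ).2

lemma summable_term {κ : ℝ} (hκ : κ ∈ Set.Ioo (0 : ℝ) 1) (t : ℝ) :
    Summable fun n : ℕ => coeff n * (κ ^ 2 * sin t ^ 2) ^ n :=
  Summable.of_norm_bounded (summable_geom hκ) fun n => norm_term_le κ n t

lemma continuous_integrand {κ : ℝ} (hκ : κ ∈ Set.Ioo (0 : ℝ) 1) :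
    Continuous fun t : ℝ => gaussHyp (1/4) (3/4) (1/2) (κ ^ 2 * sin t ^ 2) := by
  simp only [gaussHyp_eq]
  exact continuous_tsum (fun n => by fun_prop) (summable_geom hκ) fun n t => norm_term_le κ n t

lemma one_le_integrand {κ : ℝ} (hκ : κ ∈ Set.Ioo (0 : ℝ) 1) (t : ℝ) :
    1 ≤ gaussHyp (1/4) (3/4) (1/2) (κ ^ 2 * sin t ^ 2) := by
  rw [gaussHyp_eq]
  have h := (summable_term hκ t).le_tsum 0 fun n _ => term_nonneg κ n t
  simpa [coeff_zero] using h

/-- Termwise integration over `[0, π]`: Wallis' formula turns the lower parameter `1/2` into `1`. -/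
lemma integral_gaussHyp_sin {κ : ℝ} (hκ : κ ∈ Set.Ioo (0 : ℝ) 1) :
    ∫ t in (0:ℝ)..π, gaussHyp (1/4) (3/4) (1/2) (κ ^ 2 * sin t ^ 2) =
      π * gaussHyp (1/4) (3/4) 1 (κ ^ 2) := by
  have h := intervalIntegral.hasSum_integral_of_dominated_convergence (μ := MeasureTheory.volume)
    (a := 0) (b := π) (F := fun (n : ℕ) (t : ℝ) => coeff n * (κ ^ 2 * sin t ^ 2) ^ n)
    (f := fun t => gaussHyp (1/4) (3/4) (1/2) (κ ^ 2 * sin t ^ 2))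
    (fun n _ => (κ ^ 2) ^ n)
    (fun n => Continuous.aestronglyMeasurable (by fun_prop))
    (fun n => Filter.Eventually.of_forall fun t _ => norm_term_le κ n t)
    (Filter.Eventually.of_forall fun t _ => summable_geom hκ)
    (by simp)
    (Filter.Eventually.of_forall fun t _ => (summable_term hκ t).hasSum)
  rw [← h.tsum_eq, gaussHyp, ← tsum_mul_left]
  refine tsum_congr fun n => ?_
  -- Mathlib states Wallis' formula with this product, which equals `(1/2)ₙ / n!`.
  have hw : ∏ i ∈ Finset.range n, ((2 * i + 1 : ℝ) / (2 * i + 2)) =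
      (ascPochhammer ℝ n).eval (1/2) / n.factorial := by
    induction n with
    | zero => simp
    | succ n ih =>
      rw [Finset.prod_range_succ, ih, ascPochhammer_succ_eval, Nat.factorial_succ]
      have : (n.factorial : ℝ) ≠ 0 := by positivity
      push_cast
      field_simp
      ring
  have h3 := (ascPochhammer_pos n (1/2 : ℝ) (by norm_num)).ne'
  have h4 : (n.factorial : ℝ) ≠ 0 := by positivity
  simp only [mul_pow, ← pow_mul (sin _), intervalIntegral.integral_const_mul]
  rw [integral_sin_pow_even, hw, ascPochhammer_eval_one, coeff]
  field_simp

theorem stmt_10 (κ : ℝ) (hκ : κ ∈ Set.Ioo (0 : ℝ) 1)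
    (f : ℝ → ℝ)
    (hf : ∀ T : ℝ, f T = ∫ t in (0:ℝ)..T, gaussHyp (1/4) (3/4) (1/2) (κ^2 * Real.sin t ^ 2))
    (φ : ℝ → ℝ) (hφf : Function.LeftInverse φ f) (hfφ : Function.RightInverse φ f)
    (ψ : ℝ → ℝ) (hψ : ∀ u : ℝ, ψ u = Real.arcsin (κ * Real.sin (φ u)))
    (d : ℝ → ℝ) (hd : ∀ u : ℝ, d u = Real.cos (ψ u))
    (I : ℝ) (hI : I = f (π/2)) :
    Function.Periodic d (2 * I) ∧ 0 < 2 * I ∧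
      (∀ T : ℝ, 0 < T → Function.Periodic d T → 2 * I ≤ T) ∧
      2 * I = π * gaussHyp (1/4) (3/4) 1 (κ^2) := by
  have hval := integral_gaussHyp_sin hκ
  have hcont := continuous_integrand hκ
  have hone := one_le_integrand hκ
  set G : ℝ → ℝ := fun t => gaussHyp (1/4) (3/4) (1/2) (κ^2 * Real.sin t ^ 2) with hG
  have hfG : ∀ T, f T = ∫ t in (0:ℝ)..T, G t := hf
  have hint : ∀ a b, IntervalIntegrable G MeasureTheory.volume a b := fun a b =>
    hcont.intervalIntegrable a b
  have hsub : ∀ a b, f b - f a = ∫ t in a..b, G t := fun a b => by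
    rw [hfG, hfG, intervalIntegral.integral_interval_sub_left (hint _ _) (hint _ _)]
  have hmono : StrictMono f := by
    intro a b hab
    have h := intervalIntegral.intervalIntegral_pos_of_pos (hint a b)
      (fun t => lt_of_lt_of_le one_pos (hone t)) hab
    rw [← hsub] at h
    linarith
  have hf0 : f 0 = 0 := by rw [hfG, intervalIntegral.integral_same]
  have hφ0 : φ 0 = 0 := by rw [← hf0, hφf, hf0]
  have hper : Function.Periodic G π := fun t => by simp [hG, sin_add_pi]
  have hadd : ∀ T, f (T + π) = f T + f π := fun T => by
    have h1 := hsub T (T + π)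
    have h2 := hper.intervalIntegral_add_eq T 0
    rw [zero_add, ← hfG] at h2
    linarith
  have hpi : f π = 2 * I := by
    have h1 : f π - f (π/2) = f (π/2) := by
      have h2 := intervalIntegral.integral_comp_sub_left (a := 0) (b := π/2) G π
      rw [show π - π/2 = π/2 by ring, sub_zero, ← hsub] at h2
      rw [← h2, hfG]
      refine intervalIntegral.integral_congr fun t _ => ?_
      simp [hG, sin_pi_sub]
    linarith
  have hφadd : ∀ u, φ (u + 2 * I) = φ u + π := fun u => by
    rw [← hφf (φ u + π), hadd, hfφ u, hpi]
  have hd' : ∀ u, d u = √(1 - (κ * sin (φ u)) ^ 2) := fun u => by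
    rw [hd, hψ, cos_arcsin]
  refine ⟨fun u => ?_, ?_, fun T hT hTper => ?_, ?_⟩
  · simp only [hd', hφadd, sin_add_pi, mul_neg, neg_sq]
  · rw [← hpi, ← hf0]
    exact hmono pi_pos
  · have h0 : d T = 1 := by
      have := hTper 0
      rw [zero_add] at this
      rw [this, hd', hφ0]
      simp
    rw [hd', sqrt_eq_one] at h0
    have hs : sin (φ T) = 0 := by
      have : (κ * sin (φ T)) ^ 2 = 0 := by linarith
      simpa [hκ.1.ne'] using this
    obtain ⟨k, hk⟩ := sin_eq_zero_iff.1 hs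
    have hφpos : 0 < φ T := by
      rw [← hmono.lt_iff_lt, hf0, hfφ T]
      exact hT
    have hk1 : (1:ℝ) ≤ k := by
      rw [← hk] at hφpos
      have : (0:ℝ) < k := pos_of_mul_pos_left hφpos pi_pos.le
      exact_mod_cast this
    rw [← hpi, ← hfφ T]
    refine hmono.monotone ?_
    rw [← hk]
    nlinarith [pi_pos]
  · rw [← hpi, hfG, hval]
end

section
/- For every λ with 0 < λ < 1, √(1 + λ) · F(1/4, 3/4; 1; 1 − λ²) = √2 · F(1/2, 1/2; 1; (1 − λ)/(1 + λ)), where F denotes the Gauss hypergeometric series. -/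
/-!
Put `c n = (1/2)_n / n!`, so that `(1 - w) ^ (-1/2) = ∑ c n * w ^ n` on the unit disc. The theorem
comes from computing the mean over the circle of `|1 - r e^{iθ}|⁻¹`, for `0 ≤ r < 1`, twice.

* By Parseval for the series of `(1 - w) ^ (-1/2)` at `w = r e^{iθ}`, the mean is
  `∑ (c n)² r ^ (2n) = F(1/2, 1/2; 1; r²)` (`hasSum_circle`).
* Since `|1 - r e^{iθ}|² = 1 + r² - 2 r cos θ = (1 + r²) (1 - z cos θ)` with `z = 2r / (1 + r²)`,
  the mean is also `(1 + r²) ^ (-1/2)` times that of `(1 - z cos θ) ^ (-1/2)`. Expanding in powers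
  of `z cos θ`, where odd moments of the cosine vanish and the `2k`-th one is `c k`, gives
  `∑ c (2k) * c k * z ^ (2k) = F(1/4, 3/4; 1; z²)` (`hasSum_cos`).

With `r² = (1 - λ) / (1 + λ)` one has `z² = 1 - λ²` and `1 + r² = 2 / (1 + λ)`. No analytic
continuation is needed, as `z < 1` throughout.
-/

open Real

/-! ### The power series of `(1 - w) ^ (-1/2)` -/

/-- The coefficients `(1/2)_n / n!` of the power series of `(1 - w) ^ (-1/2)` at `0`. -/
noncomputable def halfCoeff (n : ℕ) : ℝ :=
  (ascPochhammer ℝ n).eval (1 / 2) / (n.factorial : ℝ)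

lemma halfCoeff_zero : halfCoeff 0 = 1 := by simp [halfCoeff]

lemma halfCoeff_succ (n : ℕ) : halfCoeff (n + 1) = halfCoeff n * ((n + 1 / 2) / (n + 1)) := by
  have : (n.factorial : ℝ) ≠ 0 := by positivity
  simp only [halfCoeff, ascPochhammer_succ_eval, Nat.factorial_succ]
  push_cast
  field_simp
  ring

lemma halfCoeff_nonneg (n : ℕ) : 0 ≤ halfCoeff n := by
  induction n with
  | zero => simp [halfCoeff_zero]
  | succ n ih => rw [halfCoeff_succ]; positivity

lemma halfCoeff_le_one (n : ℕ) : halfCoeff n ≤ 1 := by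
  induction n with
  | zero => simp [halfCoeff_zero]
  | succ n ih =>
    rw [halfCoeff_succ]
    refine mul_le_one₀ ih (by positivity) ?_
    rw [div_le_one (by positivity)]
    linarith

lemma summable_halfCoeff {r : ℝ} (h0 : 0 ≤ r) (h1 : r < 1) :
    Summable fun n => halfCoeff n * r ^ n := by
  refine Summable.of_nonneg_of_le (fun n => mul_nonneg (halfCoeff_nonneg n) (by positivity))
    (fun n => ?_) (summable_geometric_of_lt_one h0 h1)
  exact mul_le_of_le_one_left (by positivity) (halfCoeff_le_one n)

lemma choose_eq_halfCoeff (n : ℕ) : Ring.choose ((1 / 2 : ℝ) + n - 1) n = halfCoeff n := by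
  rw [Ring.choose_eq_smul, Polynomial.descPochhammer_smeval_eq_ascPochhammer,
    Polynomial.ascPochhammer_smeval_cast, Polynomial.ascPochhammer_smeval_eq_eval]
  rw [halfCoeff, show (1 / 2 : ℝ) + n - 1 - n + 1 = 1 / 2 by ring]
  simp [div_eq_inv_mul]

lemma hasSum_halfCoeff_complex {w : ℂ} (hw : ‖w‖ < 1) :
    HasSum (fun n => (halfCoeff n : ℂ) * w ^ n) (1 / (1 - w) ^ (((1 / 2 : ℝ) : ℂ))) := by
  have h := (Complex.one_div_one_sub_cpow_hasFPowerSeriesOnBall_zero ((1 / 2 : ℝ) : ℂ)).hasSum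
    (y := w) (by rw [← ENNReal.ofReal_one, Metric.eball_ofReal]; simpa using hw)
  simp only [FormalMultilinearSeries.ofScalars_apply_eq, zero_add, smul_eq_mul] at h
  refine h.congr_fun fun n => ?_
  rw [← choose_eq_halfCoeff, Complex.ofReal_choose]
  push_cast
  rfl

lemma hasSum_halfCoeff_real {s : ℝ} (hs : |s| < 1) :
    HasSum (fun n => halfCoeff n * s ^ n) (1 / √(1 - s)) := by
  have h := hasSum_halfCoeff_complex (w := (s : ℂ)) (by simpa using hs)
  have h1 : 0 ≤ 1 - s := by linarith [(abs_lt.mp hs).2]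
  rw [← Complex.ofReal_one, ← Complex.ofReal_sub, ← Complex.ofReal_cpow h1, ← Real.sqrt_eq_rpow]
    at h
  exact_mod_cast h

lemma hasSum_mul_complex {f g : ℕ → ℂ} {a b : ℂ} (hf : HasSum f a) (hg : HasSum g b)
    (hf' : Summable fun n => ‖f n‖) (hg' : Summable fun n => ‖g n‖) :
    HasSum (fun p : ℕ × ℕ => f p.1 * g p.2) (a * b) :=
  hf.mul hg (summable_mul_of_summable_norm hf' hg')

lemma summable_norm_halfCoeff {w : ℂ} (hw : ‖w‖ < 1) :
    Summable fun n => ‖(halfCoeff n : ℂ) * w ^ n‖ := by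
  refine (summable_halfCoeff (norm_nonneg w) hw).congr fun n => ?_
  rw [norm_mul, norm_pow, Complex.norm_real, Real.norm_of_nonneg (halfCoeff_nonneg n)]

/-- The sum `g` of the series at `w` is `(1 - w) ^ (-1/2)`, hence `|g|² = |1 - w|⁻¹`. -/
lemma exists_hasSum {w : ℂ} (hw : ‖w‖ < 1) :
    ∃ g : ℂ, HasSum (fun n => (halfCoeff n : ℂ) * w ^ n) g ∧
      g * starRingEnd ℂ g = ((1 / ‖1 - w‖ : ℝ) : ℂ) := by
  refine ⟨_, hasSum_halfCoeff_complex hw, ?_⟩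
  rw [Complex.mul_conj, Complex.normSq_eq_norm_sq, norm_div, Complex.norm_cpow_real, norm_one,
    div_pow, ← Real.sqrt_eq_rpow, Real.sq_sqrt (norm_nonneg _), one_pow]

lemma hasSum_conj {w g : ℂ} (h : HasSum (fun n => (halfCoeff n : ℂ) * w ^ n) g) :
    HasSum (fun n => (halfCoeff n : ℂ) * (starRingEnd ℂ w) ^ n) (starRingEnd ℂ g) := by
  refine (Complex.hasSum_conj'.mpr h).congr_fun fun n => ?_
  rw [map_mul, map_pow, Complex.conj_ofReal]

/-- The double series of `g(w) * conj (g(w)) = |1 - w|⁻¹`, where `g(w) = (1 - w) ^ (-1/2)`. -/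
lemma hasSum_prod {w : ℂ} (hw : ‖w‖ < 1) :
    HasSum (fun p : ℕ × ℕ => ((halfCoeff p.1 : ℂ) * w ^ p.1) *
      ((halfCoeff p.2 : ℂ) * (starRingEnd ℂ w) ^ p.2)) ((1 / ‖1 - w‖ : ℝ) : ℂ) := by
  obtain ⟨g, h, e⟩ := exists_hasSum hw
  have hw' : ‖starRingEnd ℂ w‖ < 1 := by rwa [Complex.norm_conj]
  rw [← e]
  have q := hasSum_mul_complex h (hasSum_conj h) (summable_norm_halfCoeff hw)
    (summable_norm_halfCoeff hw')
  exact q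

/-! ### The two evaluations of the circle mean -/

/-- A series dominated by a summable sequence of constants may be integrated term by term. -/
lemma hasSum_integral_of_le {ι E : Type*} [Countable ι] [NormedAddCommGroup E] [NormedSpace ℝ E]
    {F : ι → ℝ → E} {f : ℝ → E} {B : ι → ℝ} {a b : ℝ}
    (hF : ∀ i, Continuous (F i)) (hb : ∀ i t, ‖F i t‖ ≤ B i) (hB : Summable B)
    (hf : ∀ t, HasSum (fun i => F i t) (f t)) :
    HasSum (fun i => ∫ t in a..b, F i t) (∫ t in a..b, f t) := by
  refine intervalIntegral.hasSum_integral_of_dominated_convergence (fun i _ => B i)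
    (fun i => (hF i).aestronglyMeasurable) (fun i => .of_forall fun t _ => hb i t)
    (.of_forall fun t _ => hB) (by simp) (.of_forall fun t _ => hf t)

lemma integral_exp_int (m n : ℕ) :
    ∫ t in (0 : ℝ)..2 * π, Complex.exp (((m : ℂ) - n) * Complex.I * t) =
      if m = n then (2 * π : ℂ) else 0 := by
  split_ifs with h
  · simp [h]
  · have hc : ((m : ℂ) - n) * Complex.I ≠ 0 :=
      mul_ne_zero (sub_ne_zero.mpr (by exact_mod_cast h)) Complex.I_ne_zero
    rw [integral_exp_mul_complex hc]
    have : Complex.exp (((m : ℂ) - n) * Complex.I * ((2 * π : ℝ) : ℂ)) = 1 := by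
      rw [Complex.exp_eq_one_iff]
      exact ⟨(m : ℤ) - n, by push_cast; ring⟩
    rw [this]
    simp

lemma norm_one_sub_circle (r t : ℝ) :
    ‖1 - (r : ℂ) * Complex.exp (t * Complex.I)‖ = √(1 + r ^ 2 - 2 * r * cos t) := by
  rw [Complex.norm_def, Complex.normSq_apply]
  congr 1
  simp [Complex.exp_ofReal_mul_I_re, Complex.exp_ofReal_mul_I_im]
  nlinarith [sin_sq_add_cos_sq t]

/-- Parseval's identity for `(1 - w) ^ (-1/2)` on the circle of radius `r`. -/
lemma hasSum_circle {r : ℝ} (h0 : 0 ≤ r) (h1 : r < 1) :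
    HasSum (fun n => halfCoeff n ^ 2 * (r ^ 2) ^ n * (2 * π))
      (∫ t in (0 : ℝ)..2 * π, 1 / √(1 + r ^ 2 - 2 * r * cos t)) := by
  have hnorm (t : ℝ) : ‖(r : ℂ) * Complex.exp (t * Complex.I)‖ < 1 := by
    rwa [norm_mul, Complex.norm_exp_ofReal_mul_I, mul_one, Complex.norm_real,
      Real.norm_of_nonneg h0]
  have hterm (p : ℕ × ℕ) (t : ℝ) :
      ((halfCoeff p.1 : ℂ) * ((r : ℂ) * Complex.exp (t * Complex.I)) ^ p.1) *
        ((halfCoeff p.2 : ℂ) * (starRingEnd ℂ ((r : ℂ) * Complex.exp (t * Complex.I))) ^ p.2) =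
      (((halfCoeff p.1 * r ^ p.1) * (halfCoeff p.2 * r ^ p.2) : ℝ) : ℂ) *
        Complex.exp (((p.1 : ℂ) - p.2) * Complex.I * t) := by
    rw [map_mul, ← Complex.exp_conj, mul_pow, mul_pow, ← Complex.exp_nat_mul,
      ← Complex.exp_nat_mul]
    have : Complex.exp (((p.1 : ℂ) - p.2) * Complex.I * t) =
        Complex.exp (p.1 * (t * Complex.I)) *
          Complex.exp (p.2 * (starRingEnd ℂ) (t * Complex.I)) := by
      rw [← Complex.exp_add]
      congr 1
      simp
      ring
    rw [this]
    push_cast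
    simp only [Complex.conj_ofReal]
    ring
  have hs := summable_halfCoeff h0 h1
  have hnn (n : ℕ) : 0 ≤ halfCoeff n * r ^ n := mul_nonneg (halfCoeff_nonneg n) (by positivity)
  have key := hasSum_integral_of_le (a := 0) (b := 2 * π)
    (F := fun (p : ℕ × ℕ) (t : ℝ) =>
      (((halfCoeff p.1 * r ^ p.1) * (halfCoeff p.2 * r ^ p.2) : ℝ) : ℂ) *
        Complex.exp (((p.1 : ℂ) - p.2) * Complex.I * t))
    (f := fun t => ((1 / √(1 + r ^ 2 - 2 * r * cos t) : ℝ) : ℂ))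
    (B := fun p => (halfCoeff p.1 * r ^ p.1) * (halfCoeff p.2 * r ^ p.2))
    (fun p => by fun_prop)
    (fun p t => by
      have : ((p.1 : ℂ) - p.2) * Complex.I * t = (((p.1 : ℝ) - p.2) * t : ℝ) * Complex.I := by
        push_cast; ring
      rw [this, norm_mul, Complex.norm_exp_ofReal_mul_I, mul_one, Complex.norm_real,
        Real.norm_of_nonneg (mul_nonneg (hnn _) (hnn _))])
    (hs.mul_of_nonneg hs hnn hnn)
    (fun t => by
      have h := hasSum_prod (hnorm t)
      rw [norm_one_sub_circle] at h
      exact h.congr_fun (fun p => (hterm p t).symm))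
  simp only [intervalIntegral.integral_const_mul, integral_exp_int,
    intervalIntegral.integral_ofReal] at key
  -- Only the diagonal terms survive.
  have hinj : Function.Injective (fun n : ℕ => (n, n)) := fun a b h => congrArg Prod.fst h
  rw [← hinj.hasSum_iff] at key
  · rw [← Complex.hasSum_ofReal]
    refine key.congr_fun fun n => ?_
    simp
    ring
  · rintro ⟨m, n⟩ h
    rw [if_neg, mul_zero]
    exact fun hmn => h ⟨m, Prod.ext rfl hmn⟩

lemma integral_cos_pow_even (k : ℕ) :
    ∫ t in (0 : ℝ)..2 * π, cos t ^ (2 * k) = halfCoeff k * (2 * π) := by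
  induction k with
  | zero => simp [halfCoeff_zero]
  | succ k ih =>
    rw [show 2 * (k + 1) = 2 * k + 2 by ring, integral_cos_pow, ih, halfCoeff_succ]
    simp
    field_simp

lemma integral_cos_pow_odd (k : ℕ) : ∫ t in (0 : ℝ)..2 * π, cos t ^ (2 * k + 1) = 0 := by
  induction k with
  | zero => simp
  | succ k ih =>
    rw [show 2 * (k + 1) + 1 = 2 * k + 1 + 2 by ring, integral_cos_pow, ih]
    simp

/-- Termwise integration of the series of `(1 - z cos t) ^ (-1/2)`; only the even powers of the
cosine contribute. -/
lemma hasSum_cos {z : ℝ} (h0 : 0 ≤ z) (h1 : z < 1) :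
    HasSum (fun k => halfCoeff (2 * k) * halfCoeff k * (z ^ 2) ^ k * (2 * π))
      (∫ t in (0 : ℝ)..2 * π, 1 / √(1 - z * cos t)) := by
  have habs (t : ℝ) : |z * cos t| ≤ z := by
    rw [abs_mul, abs_of_nonneg h0]
    exact mul_le_of_le_one_right h0 (abs_cos_le_one t)
  have key := hasSum_integral_of_le (a := 0) (b := 2 * π)
    (F := fun (n : ℕ) (t : ℝ) => halfCoeff n * (z * cos t) ^ n)
    (f := fun t => 1 / √(1 - z * cos t)) (B := fun n => halfCoeff n * z ^ n)
    (fun n => by fun_prop)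
    (fun n t => by
      rw [norm_mul, norm_pow, Real.norm_of_nonneg (halfCoeff_nonneg n), Real.norm_eq_abs]
      exact mul_le_mul_of_nonneg_left (pow_le_pow_left₀ (abs_nonneg _) (habs t) n)
        (halfCoeff_nonneg n))
    (summable_halfCoeff h0 h1)
    (fun t => hasSum_halfCoeff_real ((habs t).trans_lt h1))
  simp only [mul_pow, intervalIntegral.integral_const_mul] at key
  have hinj : Function.Injective (fun k : ℕ => 2 * k) := fun a b h => by simpa using h
  rw [← hinj.hasSum_iff] at key
  · refine key.congr_fun fun k => ?_
    simp only [Function.comp, integral_cos_pow_even]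
    rw [pow_mul]
    ring
  · intro n hn
    rcases Nat.even_or_odd' n with ⟨k, rfl | rfl⟩
    · exact absurd ⟨k, rfl⟩ hn
    · simp [integral_cos_pow_odd]

/-! ### Identification with the hypergeometric series -/

/-- Duplication: `(1/2)_(2n) / (2n)! = (1/4)_n (3/4)_n / ((1/2)_n n!)`, multiplied by
`(1/2)_n / n!`. -/
lemma coeff_quarter (n : ℕ) :
    (ascPochhammer ℝ n).eval (1 / 4) * (ascPochhammer ℝ n).eval (3 / 4) /
      ((ascPochhammer ℝ n).eval 1 * (n.factorial : ℝ)) = halfCoeff (2 * n) * halfCoeff n := by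
  rw [ascPochhammer_eval_one]
  induction n with
  | zero => simp [halfCoeff_zero]
  | succ n ih =>
    have hf : (n.factorial : ℝ) ≠ 0 := by positivity
    have e : halfCoeff (2 * (n + 1)) * halfCoeff (n + 1) = halfCoeff (2 * n) * halfCoeff n *
        ((1 / 4 + n) * (3 / 4 + n) / ((n + 1) * (n + 1))) := by
      rw [show 2 * (n + 1) = 2 * n + 1 + 1 by ring, halfCoeff_succ, halfCoeff_succ,
        halfCoeff_succ]
      push_cast
      field_simp
      ring
    rw [e, ← ih]
    simp only [ascPochhammer_succ_eval, Nat.factorial_succ]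
    push_cast
    field_simp

lemma coeff_half (n : ℕ) :
    (ascPochhammer ℝ n).eval (1 / 2) * (ascPochhammer ℝ n).eval (1 / 2) /
      ((ascPochhammer ℝ n).eval 1 * (n.factorial : ℝ)) = halfCoeff n ^ 2 := by
  rw [ascPochhammer_eval_one, halfCoeff, div_pow, sq, sq]

lemma gaussHyp_half {r : ℝ} (h0 : 0 ≤ r) (h1 : r < 1) :
    gaussHyp (1 / 2) (1 / 2) 1 (r ^ 2) * (2 * π) =
      ∫ t in (0 : ℝ)..2 * π, 1 / √(1 + r ^ 2 - 2 * r * cos t) := by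
  rw [← (hasSum_circle h0 h1).tsum_eq, tsum_mul_right]
  simp only [gaussHyp, coeff_half]

lemma gaussHyp_quarter {z : ℝ} (h0 : 0 ≤ z) (h1 : z < 1) :
    gaussHyp (1 / 4) (3 / 4) 1 (z ^ 2) * (2 * π) =
      ∫ t in (0 : ℝ)..2 * π, 1 / √(1 - z * cos t) := by
  rw [← (hasSum_cos h0 h1).tsum_eq, tsum_mul_right]
  simp only [gaussHyp, coeff_quarter]

theorem stmt_11 (lam : ℝ) (hlam : 0 < lam) (hlam1 : lam < 1) :
    Real.sqrt (1 + lam) * gaussHyp (1/4) (3/4) 1 (1 - lam^2) =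
      Real.sqrt 2 * gaussHyp (1/2) (1/2) 1 ((1 - lam) / (1 + lam)) := by
  have hl : 0 < 1 + lam := by linarith
  have hx0 : 0 ≤ (1 - lam) / (1 + lam) := div_nonneg (by linarith) hl.le
  set r := √((1 - lam) / (1 + lam)) with hr
  have hr0 : 0 ≤ r := Real.sqrt_nonneg _
  have hr2 : r ^ 2 = (1 - lam) / (1 + lam) := Real.sq_sqrt hx0
  have hr1 : r < 1 := by
    rw [hr, Real.sqrt_lt' one_pos, one_pow, div_lt_one hl]
    linarith
  -- `(1 + lam) * r` is `2 * r / (1 + r ^ 2)`.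
  have hz2 : ((1 + lam) * r) ^ 2 = 1 - lam ^ 2 := by
    rw [mul_pow, hr2]
    field_simp
    ring
  have hz0 : 0 ≤ (1 + lam) * r := by positivity
  have hz1 : (1 + lam) * r < 1 := by
    refine lt_of_pow_lt_pow_left₀ 2 zero_le_one ?_
    rw [hz2]
    nlinarith
  have A := gaussHyp_half hr0 hr1
  have B := gaussHyp_quarter hz0 hz1
  rw [hr2] at A
  rw [hz2] at B
  have hint : (∫ t in (0 : ℝ)..2 * π, 1 / √(1 + (1 - lam) / (1 + lam) - 2 * r * cos t)) =
      √(1 + lam) / √2 * ∫ t in (0 : ℝ)..2 * π, 1 / √(1 - (1 + lam) * r * cos t) := by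
    rw [← intervalIntegral.integral_const_mul]
    congr 1
    funext t
    have : 1 + (1 - lam) / (1 + lam) - 2 * r * cos t =
        2 / (1 + lam) * (1 - (1 + lam) * r * cos t) := by
      field_simp
      ring
    rw [this, Real.sqrt_mul (by positivity), Real.sqrt_div (by norm_num), one_div, mul_inv, inv_div,
      one_div]
  rw [hint, ← B] at A
  have h2 : √2 ≠ 0 := by positivity
  have hpi : (2 * π) ≠ 0 := by positivity
  refine mul_right_cancel₀ hpi ?_
  rw [mul_assoc (√2), A]
  field_simp
end

section
/- For every λ with 0 < λ < 1, the ratio F(1/4, 3/4; 1; 1 − λ²) / F(1/4, 3/4; 1; λ²) equals √2 · F(1/2, 1/2; 1; (1 − λ)/(1 + λ)) / F(1/2, 1/2; 1; 2λ/(1 + λ)), where F denotes the Gauss hypergeometric series. -/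
/-!
When `a + b = 1`, the series `F(a, b; 1; ·)` depends only on `s = ab` and solves the self-adjoint
equation `D (x (1 - x) D f) = s f` on `(0, 1)` (`D` the derivative), which is invariant under
`x ↦ 1 - x`. If `f` solves it with `s = 3/16`, then `y(z) = f(z²)` solves
`D (z (1 - z²) D y) = (3/4) z y`; if `f` solves it with `s = 1/4`, then so does
`y(z) = (1 + z)^(-1/2) f(2z / (1 + z))`. Hence the two sides of each of the quadratic
transformations

* `(1 + z)^(-1/2) F(1/2, 1/2; 1; 2z/(1+z)) = F(1/4, 3/4; 1; z²)` (`hypF_moebius`),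
* `(1 + z)^(-1/2) F(1/2, 1/2; 1; (1-z)/(1+z)) = 2^(-1/2) F(1/4, 3/4; 1; 1 - z²)`
  (`hypF_moebius_symm`)

solve the same equation. Their Wronskian, weighted by `z (1 - z²)`, is constant on `(0, 1)`, and it
vanishes in the limit at the singular endpoint where the arguments of `F` tend to `0`
(`z = 0`, respectively `z = 1`). So the two sides are proportional (`IsSol.proportional`), and the
value at that endpoint gives the factor. Dividing the two transformations proves the theorem.

The equations are written as first-order systems for the pair of the solution and its weighted
derivative, so that no second derivatives are needed.
-/

open Real

/-! ### The series and its coefficients -/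

/-- The coefficients of `F(a, b; 1; ·)` for `a + b = 1` and `a * b = s`, defined by the recursion
with factor `(n + a) (n + b) / (n + 1)² = (n (n + 1) + s) / (n + 1)²`. -/
noncomputable def hypCoeff (s : ℝ) : ℕ → ℝ
  | 0 => 1
  | n + 1 => ((n : ℝ) * (n + 1) + s) / ((n + 1) ^ 2) * hypCoeff s n

theorem hypCoeff_pos {s : ℝ} (hs : 0 < s) (n : ℕ) : 0 < hypCoeff s n := by
  induction n with
  | zero => simp [hypCoeff]
  | succ n ih => rw [hypCoeff]; positivity

theorem hypCoeff_le_one {s : ℝ} (hs : 0 < s) (hs1 : s ≤ 1) (n : ℕ) : hypCoeff s n ≤ 1 := by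
  induction n with
  | zero => simp [hypCoeff]
  | succ n ih =>
    rw [hypCoeff]
    refine mul_le_one₀ ?_ (hypCoeff_pos hs n).le ih
    rw [div_le_one (by positivity)]
    have : (0 : ℝ) ≤ n := Nat.cast_nonneg n
    nlinarith

/-- The series `F(a, b; 1; x)` for `a + b = 1`, as a function of `s = a * b` and `x`. -/
noncomputable def hypF (s x : ℝ) : ℝ := ∑' n : ℕ, hypCoeff s n * x ^ n

/-- The coefficients of `x (1 - x) D f` for `f = hypF s`; the recursion for `hypCoeff` gives
`(n + 1) c (n + 1) - n c n = s c n / (n + 1)`. -/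
noncomputable def hypGCoeff (s : ℝ) : ℕ → ℝ
  | 0 => 0
  | n + 1 => s * hypCoeff s n / (n + 1)

/-- The weighted derivative `x (1 - x) D f` of `f = hypF s`, as a power series
(see `hypG_eq` for the identification). -/
noncomputable def hypG (s x : ℝ) : ℝ := ∑' n : ℕ, hypGCoeff s n * x ^ n

theorem gaussHyp_eq_hypF {a b : ℝ} (hab : a + b = 1) (x : ℝ) :
    gaussHyp a b 1 x = hypF (a * b) x := by
  unfold gaussHyp hypF
  congr 1
  ext n
  congr 1
  induction n with
  | zero => simp [hypCoeff]
  | succ n ih =>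
    rw [hypCoeff, ← ih, ascPochhammer_succ_eval, ascPochhammer_succ_eval, ascPochhammer_succ_eval,
      ascPochhammer_eval_one, Nat.factorial_succ]
    obtain rfl : b = 1 - a := by linarith
    have : (n.factorial : ℝ) ≠ 0 := by positivity
    push_cast
    field_simp
    ring

/-! ### Power series with bounded coefficients -/

theorem summable_of_bdd {c : ℕ → ℝ} (hc : ∀ n, |c n| ≤ 1) {x : ℝ} (hx : |x| < 1) :
    Summable fun n => c n * x ^ n := by
  refine Summable.of_norm_bounded (g := fun n => |x| ^ n)
    (summable_geometric_of_lt_one (abs_nonneg x) hx) fun n => ?_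
  rw [Real.norm_eq_abs, abs_mul, abs_pow]
  exact mul_le_of_le_one_left (by positivity) (hc n)

theorem summable_deriv_of_bdd {c : ℕ → ℝ} (hc : ∀ n, |c n| ≤ 1) {x : ℝ} (hx : |x| < 1) :
    Summable fun n : ℕ => c n * (n * x ^ (n - 1)) := by
  rw [← summable_nat_add_iff 1]
  have h := (summable_pow_mul_geometric_of_norm_lt_one (R := ℝ) 1 (r := |x|) (by simpa using hx)).add
    (summable_geometric_of_lt_one (abs_nonneg x) hx)
  refine Summable.of_norm_bounded h fun n => ?_
  rw [Real.norm_eq_abs, abs_mul, abs_mul, abs_pow, Nat.add_sub_cancel, Nat.abs_cast]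
  push_cast
  refine (mul_le_of_le_one_left (by positivity) (hc _)).trans (le_of_eq ?_)
  ring

theorem hasDerivAt_series {c : ℕ → ℝ} (hc : ∀ n, |c n| ≤ 1) {x : ℝ} (hx : |x| < 1) :
    HasDerivAt (fun x => ∑' n : ℕ, c n * x ^ n) (∑' n : ℕ, c n * (n * x ^ (n - 1))) x := by
  -- The derivatives are dominated uniformly on a slightly larger ball by their values at `r`.
  obtain ⟨r, hxr, hr1⟩ := exists_between hx
  have hr0 : 0 ≤ r := (abs_nonneg x).trans hxr.le
  have hu := (summable_deriv_of_bdd (c := fun _ => 1) (by simp) (x := r)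
    (by rwa [abs_of_nonneg hr0]))
  refine hasDerivAt_tsum_of_isPreconnected (g := fun n x => c n * x ^ n)
    (g' := fun n x => c n * (n * x ^ (n - 1))) (t := Metric.ball 0 r) (y₀ := 0) hu
    Metric.isOpen_ball (convex_ball 0 r).isPreconnected (fun n y _ => (hasDerivAt_pow n y).const_mul _)
    (fun n y hy => ?_) (Metric.mem_ball_self ((abs_nonneg x).trans_lt hxr))
    (summable_of_bdd hc (by simp)) (by simpa using hxr)
  have hy' : |y| < r := by simpa using hy
  rw [Real.norm_eq_abs, abs_mul, abs_mul, abs_pow, Nat.abs_cast, one_mul]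
  refine (mul_le_of_le_one_left (by positivity) (hc _)).trans ?_
  gcongr

/-! ### Values and derivatives of the two series -/

theorem abs_hypCoeff {s : ℝ} (hs : 0 < s) (hs1 : s ≤ 1) (n : ℕ) : |hypCoeff s n| ≤ 1 := by
  rw [abs_of_pos (hypCoeff_pos hs n)]
  exact hypCoeff_le_one hs hs1 n

theorem one_le_hypF {s : ℝ} (hs : 0 < s) (hs1 : s ≤ 1) {x : ℝ} (hx0 : 0 ≤ x) (hx : x < 1) :
    1 ≤ hypF s x := by
  have h := (summable_of_bdd (abs_hypCoeff hs hs1) (x := x) (by rwa [abs_of_nonneg hx0])).le_tsum 0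
    fun n _ => mul_nonneg (hypCoeff_pos hs n).le (by positivity)
  rw [hypF]
  simpa [hypCoeff] using h

theorem hypF_zero (s : ℝ) : hypF s 0 = 1 := by
  rw [hypF, tsum_eq_single 0 (by intro n hn; simp [hn])]
  simp [hypCoeff]

theorem hypG_zero (s : ℝ) : hypG s 0 = 0 := by
  rw [hypG, tsum_eq_single 0 (by intro n hn; simp [hn])]
  simp [hypGCoeff]

theorem abs_hypGCoeff {s : ℝ} (hs : 0 < s) (hs1 : s ≤ 1) (n : ℕ) : |hypGCoeff s n| ≤ 1 := by
  cases n with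
  | zero => simp [hypGCoeff]
  | succ n =>
    have h := hypCoeff_pos hs n
    rw [hypGCoeff, abs_of_pos (by positivity), div_le_one (by positivity)]
    have := mul_le_one₀ hs1 h.le (hypCoeff_le_one hs hs1 n)
    have : (0 : ℝ) ≤ n := Nat.cast_nonneg n
    linarith

theorem hasDerivAt_hypF {s : ℝ} (hs : 0 < s) (hs1 : s ≤ 1) {x : ℝ} (hx : |x| < 1) :
    HasDerivAt (hypF s) (∑' n : ℕ, hypCoeff s n * (n * x ^ (n - 1))) x :=
  hasDerivAt_series (abs_hypCoeff hs hs1) hx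

theorem hasDerivAt_hypG {s : ℝ} (hs : 0 < s) (hs1 : s ≤ 1) {x : ℝ} (hx : |x| < 1) :
    HasDerivAt (hypG s) (s * hypF s x) x := by
  refine (hasDerivAt_series (abs_hypGCoeff hs hs1) hx).congr_deriv ?_
  rw [(summable_deriv_of_bdd (abs_hypGCoeff hs hs1) hx).tsum_eq_zero_add, hypF, ← tsum_mul_left]
  simp only [Nat.cast_zero, zero_mul, mul_zero, zero_add]
  refine tsum_congr fun n => ?_
  rw [hypGCoeff, Nat.add_sub_cancel]
  push_cast
  field_simp

theorem hypG_eq {s : ℝ} (hs : 0 < s) (hs1 : s ≤ 1) {x : ℝ} (hx : |x| < 1) :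
    hypG s x = x * (1 - x) * ∑' n : ℕ, hypCoeff s n * (n * x ^ (n - 1)) := by
  have hD := summable_deriv_of_bdd (abs_hypCoeff hs hs1) hx
  have hG := summable_of_bdd (abs_hypGCoeff hs hs1) hx
  have hD1 := (summable_nat_add_iff 1).2 hD
  have e1 : x * (1 - x) * ∑' n : ℕ, hypCoeff s n * (n * x ^ (n - 1)) =
      x * (∑' n : ℕ, hypCoeff s n * (n * x ^ (n - 1))) -
        x ^ 2 * ∑' n : ℕ, hypCoeff s n * (n * x ^ (n - 1)) := by ring
  have e2 : ∑' n : ℕ, hypCoeff s n * (n * x ^ (n - 1)) =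
      ∑' n : ℕ, hypCoeff s (n + 1) * ((n + 1 : ℕ) * x ^ (n + 1 - 1)) := by
    rw [hD.tsum_eq_zero_add]
    simp
  rw [e1]
  nth_rewrite 1 [e2]
  rw [← tsum_mul_left, ← tsum_mul_left, ← (hD1.mul_left x).tsum_sub (hD.mul_left (x ^ 2)), hypG,
    hG.tsum_eq_zero_add]
  simp only [hypGCoeff, zero_mul, zero_add]
  refine tsum_congr fun n => ?_
  rw [hypCoeff, Nat.add_sub_cancel]
  -- At `n = 0` the truncated exponent `n - 1` is harmless because of the factor `n`.
  have hn : x ^ 2 * (hypCoeff s n * (n * x ^ (n - 1))) = n * hypCoeff s n * x ^ (n + 1) := by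
    cases n with
    | zero => simp
    | succ n => rw [Nat.add_sub_cancel]; ring
  rw [hn]
  push_cast
  field_simp
  ring

/-! ### The differential equations and their changes of variable -/

/-- `y` solves `D (z (1 - z²) D y) = (3/4) z y` on `(0, 1)`, with weighted derivative
`u = z (1 - z²) D y`. -/
def IsSol (y u : ℝ → ℝ) : Prop :=
  ∀ z ∈ Set.Ioo (0 : ℝ) 1,
    HasDerivAt y (u z / (z * (1 - z ^ 2))) z ∧ HasDerivAt u (3 / 4 * z * y z) z

/-- `f` solves the hypergeometric equation `D (x (1 - x) D f) = s f` on `(0, 1)`, with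
weighted derivative `g = x (1 - x) D f`. -/
def IsHypSol (s : ℝ) (f g : ℝ → ℝ) : Prop :=
  ∀ x ∈ Set.Ioo (0 : ℝ) 1,
    HasDerivAt f (g x / (x * (1 - x))) x ∧ HasDerivAt g (s * f x) x

theorem isHypSol_hyp {s : ℝ} (hs : 0 < s) (hs1 : s ≤ 1) : IsHypSol s (hypF s) (hypG s) := by
  intro x ⟨hx0, hx1⟩
  have hx : |x| < 1 := by rwa [abs_of_pos hx0]
  refine ⟨(hasDerivAt_hypF hs hs1 hx).congr_deriv ?_, hasDerivAt_hypG hs hs1 hx⟩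
  have : 1 - x ≠ 0 := by linarith
  rw [hypG_eq hs hs1 hx]
  field_simp

theorem IsHypSol.symm {s : ℝ} {f g : ℝ → ℝ} (h : IsHypSol s f g) :
    IsHypSol s (fun x => f (1 - x)) (fun x => -g (1 - x)) := by
  intro x hx
  obtain ⟨h1, h2⟩ := h (1 - x) ⟨by linarith [hx.2], by linarith [hx.1]⟩
  have hd : HasDerivAt (fun x : ℝ => 1 - x) (-1) x := by
    simpa using (hasDerivAt_id x).const_sub 1
  refine ⟨(h1.comp x hd).congr_deriv ?_, (h2.comp x hd).neg.congr_deriv (by ring)⟩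
  rw [show (1 - x) * (1 - (1 - x)) = x * (1 - x) by ring]
  ring

theorem IsHypSol.comp_sq {f g : ℝ → ℝ} (h : IsHypSol (3 / 16) f g) :
    IsSol (fun z => f (z ^ 2)) (fun z => 2 * g (z ^ 2)) := by
  intro z ⟨hz0, hz1⟩
  obtain ⟨h1, h2⟩ := h (z ^ 2) ⟨by positivity, by nlinarith⟩
  have hd : HasDerivAt (fun z : ℝ => z ^ 2) (2 * z) z := by
    simpa using hasDerivAt_pow 2 z
  have : 1 - z ^ 2 ≠ 0 := by nlinarith
  refine ⟨(HasDerivAt.comp (h₂ := f) (h := fun z => z ^ 2) z h1 hd).congr_deriv ?_,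
    ((HasDerivAt.comp (h₂ := g) (h := fun z => z ^ 2) z h2 hd).const_mul 2).congr_deriv (by ring)⟩
  field_simp

theorem IsHypSol.comp_moebius {f g : ℝ → ℝ} (h : IsHypSol (1 / 4) f g) :
    IsSol (fun z => f (2 * z / (1 + z)) / √(1 + z))
      (fun z => √(1 + z) * g (2 * z / (1 + z)) -
        z * (1 - z) / 2 * (f (2 * z / (1 + z)) / √(1 + z))) := by
  intro z ⟨hz0, hz1⟩
  obtain ⟨h1, h2⟩ := h (2 * z / (1 + z))
    ⟨by positivity, by rw [div_lt_one (by positivity)]; linarith⟩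
  have hp : 0 < 1 + z := by linarith
  have hw : HasDerivAt (fun z : ℝ => 2 * z / (1 + z)) (2 / (1 + z) ^ 2) z := by
    refine (((hasDerivAt_id z).const_mul 2).div ((hasDerivAt_id z).const_add 1)
      hp.ne').congr_deriv ?_
    simp only [id]
    ring
  have hr : HasDerivAt (fun z : ℝ => √(1 + z)) (1 / (2 * √(1 + z))) z :=
    ((hasDerivAt_id z).const_add 1).sqrt hp.ne'
  have hr0 : 0 < √(1 + z) := Real.sqrt_pos.2 hp
  have hr2 : √(1 + z) ^ 2 = 1 + z := Real.sq_sqrt hp.le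
  have hf := (h1.comp z hw).div hr hr0.ne'
  have hq : HasDerivAt (fun z : ℝ => z * (1 - z) / 2) ((1 - 2 * z) / 2) z := by
    refine (((hasDerivAt_id z).mul ((hasDerivAt_id z).const_sub 1)).div_const 2).congr_deriv ?_
    simp only [id]
    ring
  have hm : 1 - z ≠ 0 := by linarith
  have e1 : 1 - 2 * z / (1 + z) = (1 - z) / (1 + z) := by field_simp; ring
  have e2 : 1 - z ^ 2 = (1 - z) * (1 + z) := by ring
  refine ⟨hf.congr_deriv ?_, ((hr.mul (h2.comp z hw)).sub (hq.mul hf)).congr_deriv ?_⟩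
  · simp only [Function.comp]
    rw [e1, e2]
    generalize f (2 * z / (1 + z)) = A
    generalize g (2 * z / (1 + z)) = B
    generalize √(1 + z) = r at *
    -- With `z = r² - 1` the identity becomes one of rational functions of `r`, `A` and `B`.
    obtain rfl : z = r ^ 2 - 1 := by linarith
    rw [show 1 + (r ^ 2 - 1) = r ^ 2 by ring]
    field_simp
  · simp only [Function.comp, Pi.div_apply]
    rw [e1]
    generalize f (2 * z / (1 + z)) = A
    generalize g (2 * z / (1 + z)) = B
    generalize √(1 + z) = r at *
    obtain rfl : z = r ^ 2 - 1 := by linarith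
    rw [show 1 + (r ^ 2 - 1) = r ^ 2 by ring]
    field_simp
    ring

/-! ### The Wronskian argument -/

theorem eqOn_of_deriv_zero {W : ℝ → ℝ} (h : ∀ z ∈ Set.Ioo (0 : ℝ) 1, HasDerivAt W 0 z)
    {l : Filter ℝ} [l.NeBot] (hl : Set.Ioo (0 : ℝ) 1 ∈ l) {A : ℝ} (hA : Filter.Tendsto W l (nhds A))
    {z : ℝ} (hz : z ∈ Set.Ioo (0 : ℝ) 1) : W z = A := by
  obtain ⟨a, ha⟩ := isOpen_Ioo.exists_is_const_of_deriv_eq_zero isPreconnected_Ioo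
    (fun x hx => (h x hx).differentiableAt.differentiableWithinAt) (fun x hx => (h x hx).deriv)
  rw [ha z hz]
  refine tendsto_nhds_unique (tendsto_const_nhds.congr' ?_) hA
  filter_upwards [hl] with x hx using (ha x hx).symm

/-- Two solutions which have limits along a filter `l` on `(0, 1)` (in practice, approach to a
singular endpoint) and whose weighted derivatives tend to `0` there have zero Wronskian. If the
first solution and its limit do not vanish, the second is therefore the multiple of the first by the
ratio of the limits. -/
theorem IsSol.proportional {y₁ u₁ y₂ u₂ : ℝ → ℝ} (h₁ : IsSol y₁ u₁) (h₂ : IsSol y₂ u₂)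
    (hne : ∀ z ∈ Set.Ioo (0 : ℝ) 1, y₁ z ≠ 0)
    {l : Filter ℝ} [l.NeBot] (hl : Set.Ioo (0 : ℝ) 1 ∈ l) {A₁ A₂ : ℝ}
    (hA₁ : Filter.Tendsto y₁ l (nhds A₁)) (hA₂ : Filter.Tendsto y₂ l (nhds A₂)) (hA : A₁ ≠ 0)
    (hu₁ : Filter.Tendsto u₁ l (nhds 0)) (hu₂ : Filter.Tendsto u₂ l (nhds 0))
    {z : ℝ} (hz : z ∈ Set.Ioo (0 : ℝ) 1) : y₂ z = A₂ / A₁ * y₁ z := by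
  have hW : ∀ z ∈ Set.Ioo (0 : ℝ) 1, y₁ z * u₂ z - y₂ z * u₁ z = 0 := by
    intro z hz
    refine eqOn_of_deriv_zero (W := fun z => y₁ z * u₂ z - y₂ z * u₁ z) (fun z hz => ?_) hl
      (by simpa using (hA₁.mul hu₂).sub (hA₂.mul hu₁)) hz
    obtain ⟨a, b⟩ := h₁ z hz
    obtain ⟨c, d⟩ := h₂ z hz
    exact ((a.mul d).sub (c.mul b)).congr_deriv (by ring)
  rw [← div_eq_iff (hne z hz)]
  refine eqOn_of_deriv_zero (W := fun z => y₂ z / y₁ z) (fun z hz => ?_) hl (hA₂.div hA₁ hA) hz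
  obtain ⟨a, b⟩ := h₁ z hz
  obtain ⟨c, d⟩ := h₂ z hz
  refine (c.div a (hne z hz)).congr_deriv ?_
  rw [div_eq_zero_iff]
  left
  linear_combination (1 / (z * (1 - z ^ 2))) * hW z hz

/-! ### The quadratic transformations -/

theorem continuousAt_hypF_comp {s : ℝ} (hs : 0 < s) (hs1 : s ≤ 1) {w : ℝ → ℝ} {a : ℝ}
    (hw : ContinuousAt w a) (ha : w a = 0) : ContinuousAt (fun z => hypF s (w z)) a := by
  refine ContinuousAt.comp (g := hypF s) ?_ hw
  rw [ha]
  exact (hasDerivAt_hypF hs hs1 (by simp)).continuousAt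

theorem continuousAt_hypG_comp {s : ℝ} (hs : 0 < s) (hs1 : s ≤ 1) {w : ℝ → ℝ} {a : ℝ}
    (hw : ContinuousAt w a) (ha : w a = 0) : ContinuousAt (fun z => hypG s (w z)) a := by
  refine ContinuousAt.comp (g := hypG s) ?_ hw
  rw [ha]
  exact (hasDerivAt_hypG hs hs1 (by simp)).continuousAt

theorem hypF_moebius {z : ℝ} (hz : z ∈ Set.Ioo (0 : ℝ) 1) :
    hypF (1 / 4) (2 * z / (1 + z)) / √(1 + z) = hypF (3 / 16) (z ^ 2) := by
  have hw : ContinuousAt (fun z : ℝ => 2 * z / (1 + z)) 0 := by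
    fun_prop (disch := norm_num)
  have hr : ContinuousAt (fun z : ℝ => √(1 + z)) 0 := by fun_prop
  have hq : ContinuousAt (fun z : ℝ => z * (1 - z) / 2) 0 := by fun_prop
  have hs : ContinuousAt (fun z : ℝ => z ^ 2) 0 := by fun_prop
  have f₁ := continuousAt_hypF_comp (s := 3 / 16) (by norm_num) (by norm_num) hs (by simp)
  have g₁ := (continuousAt_hypG_comp (s := 3 / 16) (by norm_num) (by norm_num) hs (by simp)).const_mul 2
  have f₂ := (continuousAt_hypF_comp (s := 1 / 4) (by norm_num) (by norm_num) hw (by simp)).div hr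
    (by simp)
  have g₂ := (hr.mul (continuousAt_hypG_comp (s := 1 / 4) (by norm_num) (by norm_num) hw
    (by simp))).sub (hq.mul f₂)
  have key := (isHypSol_hyp (s := 3 / 16) (by norm_num) (by norm_num)).comp_sq.proportional
    (isHypSol_hyp (s := 1 / 4) (by norm_num) (by norm_num)).comp_moebius
    (fun z hz => (zero_lt_one.trans_le (one_le_hypF (by norm_num) (by norm_num) (sq_nonneg z)
      (by nlinarith [hz.1, hz.2]))).ne')
    (l := nhdsWithin 0 (Set.Ioi 0)) (Ioo_mem_nhdsGT one_pos) (A₁ := 1) (A₂ := 1)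
    ((f₁.mono_left nhdsWithin_le_nhds).trans (le_of_eq (by simp [hypF_zero])))
    ((f₂.mono_left nhdsWithin_le_nhds).trans (le_of_eq (by simp [hypF_zero]))) one_ne_zero
    ((g₁.mono_left nhdsWithin_le_nhds).trans (le_of_eq (by simp [hypG_zero])))
    ((g₂.mono_left nhdsWithin_le_nhds).trans (le_of_eq (by simp [hypG_zero]))) hz
  simpa using key

theorem hypF_moebius_symm {z : ℝ} (hz : z ∈ Set.Ioo (0 : ℝ) 1) :
    hypF (1 / 4) (1 - 2 * z / (1 + z)) / √(1 + z) = 1 / √2 * hypF (3 / 16) (1 - z ^ 2) := by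
  have hw : ContinuousAt (fun z : ℝ => 1 - 2 * z / (1 + z)) 1 := by
    fun_prop (disch := norm_num)
  have hr : ContinuousAt (fun z : ℝ => √(1 + z)) 1 := by fun_prop
  have hq : ContinuousAt (fun z : ℝ => z * (1 - z) / 2) 1 := by fun_prop
  have hs : ContinuousAt (fun z : ℝ => 1 - z ^ 2) 1 := by fun_prop
  have e : (1 : ℝ) + 1 = 2 := by norm_num
  have f₁ := continuousAt_hypF_comp (s := 3 / 16) (by norm_num) (by norm_num) hs (by simp)
  have g₁ := (continuousAt_hypG_comp (s := 3 / 16) (by norm_num) (by norm_num) hs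
    (by simp)).neg.const_mul 2
  have f₂ := (continuousAt_hypF_comp (s := 1 / 4) (by norm_num) (by norm_num) hw (by norm_num)).div hr
    (by rw [e]; simp)
  have g₂ := (hr.mul (continuousAt_hypG_comp (s := 1 / 4) (by norm_num) (by norm_num) hw
    (by norm_num)).neg).sub (hq.mul f₂)
  have key := (isHypSol_hyp (s := 3 / 16) (by norm_num) (by norm_num)).symm.comp_sq.proportional
    (isHypSol_hyp (s := 1 / 4) (by norm_num) (by norm_num)).symm.comp_moebius
    (fun z hz => (zero_lt_one.trans_le (one_le_hypF (by norm_num) (by norm_num)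
      (by nlinarith [hz.1, hz.2]) (by nlinarith [hz.1, hz.2]))).ne')
    (l := nhdsWithin 1 (Set.Iio 1)) (Ioo_mem_nhdsLT one_pos) (A₁ := 1) (A₂ := 1 / √2)
    ((f₁.mono_left nhdsWithin_le_nhds).trans (le_of_eq (by simp [hypF_zero])))
    ((f₂.mono_left nhdsWithin_le_nhds).trans (le_of_eq (by norm_num [hypF_zero]))) one_ne_zero
    ((g₁.mono_left nhdsWithin_le_nhds).trans (le_of_eq (by simp [hypG_zero])))
    ((g₂.mono_left nhdsWithin_le_nhds).trans (le_of_eq (by norm_num [hypG_zero]))) hz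
  simpa using key

theorem stmt_13 (lam : ℝ) (hlam : 0 < lam) (hlam1 : lam < 1) :
    gaussHyp (1/4) (3/4) 1 (1 - lam^2) / gaussHyp (1/4) (3/4) 1 (lam^2) =
      Real.sqrt 2 * gaussHyp (1/2) (1/2) 1 ((1 - lam) / (1 + lam)) /
        gaussHyp (1/2) (1/2) 1 (2 * lam / (1 + lam)) := by
  have e1 : (1 / 4 : ℝ) * (3 / 4) = 3 / 16 := by norm_num
  have e2 : (1 / 2 : ℝ) * (1 / 2) = 1 / 4 := by norm_num
  have hp : 0 < √(1 + lam) := Real.sqrt_pos.2 (by linarith)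
  have h2 : 0 < √2 := Real.sqrt_pos.2 two_pos
  have ew : (1 - lam) / (1 + lam) = 1 - 2 * lam / (1 + lam) := by field_simp; ring
  simp only [gaussHyp_eq_hypF (show (1 / 4 : ℝ) + 3 / 4 = 1 by norm_num),
    gaussHyp_eq_hypF (show (1 / 2 : ℝ) + 1 / 2 = 1 by norm_num), e1, e2]
  have k1 := hypF_moebius ⟨hlam, hlam1⟩
  have k2 := hypF_moebius_symm ⟨hlam, hlam1⟩
  rw [← ew] at k2
  have k3 : hypF (3 / 16) (1 - lam ^ 2) =
      √2 * (hypF (1 / 4) ((1 - lam) / (1 + lam)) / √(1 + lam)) := by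
    rw [k2]; field_simp
  rw [k3, ← k1, ← mul_div_assoc, div_div_div_cancel_right₀ hp.ne']
end
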